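/- arXiv:2105.07247 — 2 statements merged into one kernel-verified Lean document; each statement's English description precedes it below -/
import Mathlib

section
/- Let G be a finite group, N a normal subgroup of G with Q = G/N abelian, and q ∈ G. Then the number of conjugacy classes of G contained in the coset qN equals the number of orbits of the action of the character group Q̂ on the set of complex irreducible characters of G that contain a character ρ which is not identically zero on qN. -/
open scoped BigOperators

/-- `ρ : G → ℂ` is the character of an irreducible (simple) finite-dimensional
complex representation of `G`. -/
def IsIrrChar (G : Type) [Group G] (ρ : G → ℂ) : Prop :=
  ∃ V : FDRep ℂ G, CategoryTheory.Simple V ∧ ρ = V.character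

/-- `Θ : G → ℂ` is the character of some finite-dimensional complex representation of `G`. -/
def IsChar (G : Type) [Group G] (Θ : G → ℂ) : Prop :=
  ∃ V : FDRep ℂ G, Θ = V.character

variable {G : Type} [Group G]

/-- The action of a character `χ ∈ Q̂` (where `Q = G ⧸ N`) on a function `ρ : G → ℂ`:
`(χ · ρ)(g) = χ(gN) · ρ(g)`. -/
def charMul (N : Subgroup G) [N.Normal] (χ : (G ⧸ N) →* ℂˣ) (ρ : G → ℂ) : G → ℂ :=
  fun g => (χ (g : G ⧸ N) : ℂ) * ρ g

/-- The orbit of `ρ` under the tensoring action of `Q̂ = Hom(G ⧸ N, ℂˣ)`. -/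
def qhatOrbit (N : Subgroup G) [N.Normal] (ρ : G → ℂ) : Set (G → ℂ) :=
  {ρ' | ∃ χ : (G ⧸ N) →* ℂˣ, ρ' = charMul N χ ρ}

/-- The coset `qN`, as a subset of `G`. -/
def coset (N : Subgroup G) [N.Normal] (q : G) : Set G :=
  {g | (g : G ⧸ N) = (q : G ⧸ N)}

/-- `C_q`: the set of conjugacy classes of `G` contained in the coset `qN`. -/
def Cset (N : Subgroup G) [N.Normal] (q : G) : Set (ConjClasses G) :=
  {c | c.carrier ⊆ coset N q}

/-- `R_q`: the set of `Q̂`-orbits on the irreducible characters of `G`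
containing a character not identically zero on `qN`. -/
def Rset (N : Subgroup G) [N.Normal] (q : G) : Set (Set (G → ℂ)) :=
  {S | (∃ ρ, IsIrrChar G ρ ∧ S = qhatOrbit N ρ) ∧ ∃ ρ' ∈ S, ∃ g ∈ coset N q, ρ' g ≠ 0}

/-- The class function `π_x` for `x ∈ Q = G ⧸ N`:
`π_x(g) = (1/#Q̂) ∑_{χ ∈ Q̂} conj(χ(x)) χ(gN)`. -/
noncomputable def piQ (N : Subgroup G) [N.Normal] (x : G ⧸ N) : G → ℂ :=
  fun g => (Nat.card ((G ⧸ N) →* ℂˣ) : ℂ)⁻¹ *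
    ∑ᶠ χ : (G ⧸ N) →* ℂˣ, (starRingEnd ℂ) (χ x : ℂ) * (χ (g : G ⧸ N) : ℂ)

/-- The space of class functions on `G`, as a submodule of `G → ℂ`. -/
noncomputable def classFunSubmodule (G : Type) [Group G] : Submodule ℂ (G → ℂ) where
  carrier := {f | ∀ g h : G, f (h * g * h⁻¹) = f g}
  add_mem' := by intro a b ha hb g h; simp only [Pi.add_apply, ha g h, hb g h]
  zero_mem' := by intro g h; rfl
  smul_mem' := by intro c f hf g h; simp only [Pi.smul_apply, hf g h]

/-- The space of class functions on `G` vanishing outside the coset `qN`. -/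
noncomputable def cosetClassFun (N : Subgroup G) [N.Normal] (q : G) : Submodule ℂ (G → ℂ) where
  carrier := {f | (∀ g h : G, f (h * g * h⁻¹) = f g) ∧ ∀ g, g ∉ coset N q → f g = 0}
  add_mem' := by
    intro a b ha hb
    exact ⟨fun g h => by simp only [Pi.add_apply, ha.1 g h, hb.1 g h],
      fun g hg => by simp only [Pi.add_apply, ha.2 g hg, hb.2 g hg, add_zero]⟩
  zero_mem' := ⟨fun g h => rfl, fun g hg => rfl⟩
  smul_mem' := by
    intro c f hf
    exact ⟨fun g h => by simp only [Pi.smul_apply, hf.1 g h],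
      fun g hg => by simp only [Pi.smul_apply, hf.2 g hg, smul_zero]⟩

/-!
Multiplication by the indicator function `π_q` of `qN` projects the space of class functions onto
those supported on `qN`, a space of dimension `#C_q`. As `Q` is abelian, `π_q` is a linear
combination of characters of `Q`, so this projection preserves the span of every `Q̂`-orbit of
irreducible characters. On `qN`, twisting by `χ` only multiplies by the scalar `χ(q)`, so the
projection of the span of an orbit is a line, or zero when the orbit vanishes on `qN`. The
irreducible characters form a basis of the class functions, hence these lines are independent and
span the image, whose dimension is therefore also `#R_q`.
-/

theorem iSupIndep_span_image {ι κ R M : Type*} [Semiring R] [AddCommMonoid M] [Module R M]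
    {v : ι → M} (hv : LinearIndependent R v) {s : κ → Set ι}
    (hs : Pairwise fun i j => Disjoint (s i) (s j)) :
    iSupIndep fun i => Submodule.span R (v '' s i) := by
  intro i
  simp only [← Submodule.span_iUnion, ← Set.image_iUnion]
  refine hv.disjoint_span_image ?_
  simp only [Set.disjoint_iUnion_right]
  exact fun j hj => hs hj.symm

section GroupAlgebra

open Representation
open scoped MonoidAlgebra

universe u v w

variable {k : Type u} {Γ : Type v} [Group Γ]

theorem commute_sum_smul_of_conj_invariant {V : Type*} [CommSemiring k] [AddCommMonoid V]
    [Module k V] [Fintype Γ] (σ : Representation k Γ V) {f : Γ → k}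
    (hf : ∀ g h, f (h * g * h⁻¹) = f g) (x : Γ) : Commute (∑ g, f g • σ g) (σ x) := by
  rw [Commute, SemiconjBy, Finset.sum_mul, Finset.mul_sum]
  refine Fintype.sum_equiv (MulAut.conj x⁻¹).toEquiv _ _ fun g => ?_
  have hfg : f (x⁻¹ * g * x) = f g := by simpa using hf g x⁻¹
  simp [← map_mul, hfg, ← mul_assoc]

variable [Field k]

theorem exists_eq_smul_one_of_forall_commute {V : Type*} [IsAlgClosed k] [AddCommGroup V]
    [Module k V] [FiniteDimensional k V] (σ : Representation k Γ V) [σ.IsIrreducible]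
    {T : Module.End k V} (hT : ∀ g, Commute T (σ g)) : ∃ c : k, T = c • 1 := by
  obtain ⟨c, hc⟩ :=
    (IsIrreducible.algebraMap_intertwiningMap_bijective_of_isAlgClosed (ρ := σ)).2 ⟨T, hT⟩
  exact ⟨c, (congrArg IntertwiningMap.toLinearMap hc).symm⟩

theorem sum_smul_eq_zero_of_sum_mul_character_eq_zero {V : Type*} [IsAlgClosed k] [CharZero k]
    [Fintype Γ] [AddCommGroup V] [Module k V] [FiniteDimensional k V] (σ : Representation k Γ V)
    [σ.IsIrreducible] {f : Γ → k} (hf : ∀ g h, f (h * g * h⁻¹) = f g)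
    (hσ : ∑ g, f g * σ.character g = 0) : ∑ g, f g • σ g = 0 := by
  obtain ⟨c, hc⟩ := exists_eq_smul_one_of_forall_commute σ
    (commute_sum_smul_of_conj_invariant σ hf)
  have : Nontrivial V := IsSimpleModule.nontrivial k[Γ] σ.asModule
  have trace_eq : c * Module.finrank k V = 0 := by
    rw [← hσ, ← smul_eq_mul, ← LinearMap.trace_one, ← map_smul, ← hc]
    simp [character]
  have finrank_ne : (Module.finrank k V : k) ≠ 0 := by exact_mod_cast Module.finrank_pos.ne'
  rw [hc, (mul_eq_zero.mp trace_eq).resolve_right finrank_ne, zero_smul]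

theorem smul_eq_zero_of_isSimpleModule {M : Type w} [AddCommGroup M] [Module k[Γ] M]
    [IsSimpleModule k[Γ] M] [Finite Γ] {a : k[Γ]}
    (ha : ∀ (V : Type w) [AddCommGroup V] [Module k V] [FiniteDimensional k V]
      (σ : Representation k Γ V) [σ.IsIrreducible], σ.asAlgebraHom a = 0) (x : M) : a • x = 0 := by
  let : Module k M := .compHom M (algebraMap k k[Γ])
  have : IsScalarTower k k[Γ] M := ⟨fun c b y => by rw [Algebra.smul_def, mul_smul]; rfl⟩
  have : FiniteDimensional k M := Module.Finite.trans k[Γ] M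
  let σ : Representation k Γ M := ofModule M
  have : σ.IsIrreducible := (isSimpleModule_iff_irreducible_ofModule M).mp inferInstance
  exact (ofModule_asAlgebraHom_apply_apply M a x).symm.trans (LinearMap.congr_fun (ha M σ) x)

/- Such an `a` annihilates every simple module, so it lies in the Jacobson radical, which vanishes
by Maschke's theorem. -/
theorem eq_zero_of_forall_asAlgebraHom_eq_zero [Finite Γ] [NeZero (Nat.card Γ : k)] {a : k[Γ]}
    (ha : ∀ (V : Type (max u v)) [AddCommGroup V] [Module k V] [FiniteDimensional k V]
      (σ : Representation k Γ V) [σ.IsIrreducible], σ.asAlgebraHom a = 0) : a = 0 := by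
  suffices a ∈ Ring.jacobson k[Γ] by
    rwa [IsSemisimpleRing.jacobson_eq_bot, Submodule.mem_bot] at this
  rw [Ring.jacobson, Module.jacobson, Submodule.mem_sInf]
  intro m hm
  have : IsSimpleModule k[Γ] (k[Γ] ⧸ m) := isSimpleModule_iff_isCoatom.mpr hm
  have smul_one := smul_eq_zero_of_isSimpleModule ha (Submodule.Quotient.mk 1 : k[Γ] ⧸ m)
  rwa [← Submodule.Quotient.mk_smul, Submodule.Quotient.mk_eq_zero, smul_eq_mul, mul_one]
    at smul_one

theorem eq_zero_of_forall_sum_mul_character_eq_zero [IsAlgClosed k] [CharZero k] [Fintype Γ]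
    {f : Γ → k} (hf : ∀ g h, f (h * g * h⁻¹) = f g)
    (h : ∀ (V : Type (max u v)) [AddCommGroup V] [Module k V] [FiniteDimensional k V]
      (σ : Representation k Γ V) [σ.IsIrreducible], ∑ g, f g * σ.character g = 0) : f = 0 := by
  have sum_eq : ∑ g, MonoidAlgebra.single g (f g) = 0 :=
    eq_zero_of_forall_asAlgebraHom_eq_zero fun V _ _ _ σ _ => by
      simpa using sum_smul_eq_zero_of_sum_mul_character_eq_zero σ hf (h V σ)
  classical
  ext g
  simpa [Finsupp.single_apply] using congrArg (fun a : k[Γ] => a.coeff g) sum_eq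

/-- The symmetric bilinear form `⟨f, h⟩ = |Γ|⁻¹ ∑ g, f(g) h(g⁻¹)` on functions on a finite group.
On complex characters it agrees with the usual Hermitian inner product. -/
noncomputable def charPairing (k : Type u) (Γ : Type v) [Group Γ] [Field k] [Fintype Γ] :
    LinearMap.BilinForm k (Γ → k) :=
  (Nat.card Γ : k)⁻¹ • ∑ g, LinearMap.BilinForm.linMulLin (LinearMap.proj g) (LinearMap.proj g⁻¹)

theorem charPairing_apply [Fintype Γ] (f h : Γ → k) :
    charPairing k Γ f h = (Nat.card Γ : k)⁻¹ * ∑ g, f g * h g⁻¹ := by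
  simp [charPairing]

end GroupAlgebra

section IrrChar

theorem isIrrChar_character_of_charPairing_self [Fintype G] {V : Type} [AddCommGroup V]
    [Module ℂ V] [FiniteDimensional ℂ V] (σ : Representation ℂ G V)
    (h : charPairing ℂ G σ.character σ.character = 1) : IsIrrChar G σ.character := by
  rw [charPairing_apply, inv_mul_eq_one₀ (NeZero.ne _)] at h
  exact ⟨FDRep.of σ, (FDRep.simple_iff_char_is_norm_one (FDRep.of σ)).mpr h.symm, rfl⟩

theorem isIrrChar_character [Finite G] {V : Type} [AddCommGroup V] [Module ℂ V]
    [FiniteDimensional ℂ V] (σ : Representation ℂ G V) [σ.IsIrreducible] :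
    IsIrrChar G σ.character := by
  have := Fintype.ofFinite G
  have := invertibleOfNonzero (NeZero.ne (Nat.card G : ℂ))
  apply isIrrChar_character_of_charPairing_self
  rw [charPairing_apply, Representation.char_orthonormal, if_pos ⟨.refl σ⟩]

namespace IsIrrChar

variable {ρ σ : G → ℂ}

theorem charPairing_self [Fintype G] (hρ : IsIrrChar G ρ) : charPairing ℂ G ρ ρ = 1 := by
  obtain ⟨V, hV, rfl⟩ := hρ
  rw [charPairing_apply, (FDRep.simple_iff_char_is_norm_one V).mp hV,
    inv_mul_cancel₀ (NeZero.ne _)]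

theorem charPairing_of_ne [Fintype G] (hρ : IsIrrChar G ρ) (hσ : IsIrrChar G σ)
    (hne : ρ ≠ σ) : charPairing ℂ G ρ σ = 0 := by
  obtain ⟨V, hV, rfl⟩ := hρ
  obtain ⟨W, hW, rfl⟩ := hσ
  have := invertibleOfNonzero (NeZero.ne (Nat.card G : ℂ))
  rw [charPairing_apply, FDRep.char_orthonormal, if_neg fun ⟨i⟩ => hne (FDRep.char_iso i)]

theorem mem_classFunSubmodule (hρ : IsIrrChar G ρ) : ρ ∈ classFunSubmodule G := by
  obtain ⟨V, -, rfl⟩ := hρ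
  exact V.char_conj

end IsIrrChar

theorem eq_zero_of_forall_charPairing_eq_zero [Fintype G] {f : G → ℂ}
    (hf : f ∈ classFunSubmodule G) (h : ∀ ρ, IsIrrChar G ρ → charPairing ℂ G f ρ = 0) : f = 0 := by
  have hf_inv : (fun g => f g⁻¹) = 0 := by
    refine eq_zero_of_forall_sum_mul_character_eq_zero (fun g x => ?_) fun V _ _ _ σ _ => ?_
    · simpa [mul_assoc] using hf g⁻¹ x
    · have := h _ (isIrrChar_character σ)
      rw [charPairing_apply, mul_eq_zero, or_iff_right (inv_ne_zero (NeZero.ne _))] at this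
      rw [← this]
      exact Fintype.sum_equiv (Equiv.inv G) _ _ fun g => by simp
  ext g
  simpa using congrFun hf_inv g⁻¹

theorem linearIndependent_irrChar [Finite G] :
    LinearIndependent ℂ ((↑) : {ρ // IsIrrChar G ρ} → G → ℂ) := by
  have := Fintype.ofFinite G
  refine LinearMap.linearIndependent_of_isOrthoᵢ (B := charPairing ℂ G)
    (fun ρ σ hne => ρ.2.charPairing_of_ne σ.2 (Subtype.coe_injective.ne hne)) fun ρ h => ?_
  exact one_ne_zero (ρ.2.charPairing_self.symm.trans h)

theorem span_irrChar [Finite G] : Submodule.span ℂ {ρ | IsIrrChar G ρ} = classFunSubmodule G := by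
  have := Fintype.ofFinite G
  refine le_antisymm (Submodule.span_le.mpr fun ρ hρ => hρ.mem_classFunSubmodule) fun f hf => ?_
  have : Finite {ρ // IsIrrChar G ρ} := linearIndependent_irrChar.finite_of_isNoetherian
  have := Fintype.ofFinite {ρ // IsIrrChar G ρ}
  let p : G → ℂ := ∑ ρ : {ρ // IsIrrChar G ρ}, charPairing ℂ G f ρ • (ρ : G → ℂ)
  have hp : p ∈ Submodule.span ℂ {ρ | IsIrrChar G ρ} :=
    Submodule.sum_mem _ fun ρ _ => Submodule.smul_mem _ _ (Submodule.subset_span ρ.2)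
  have hp_class : p ∈ classFunSubmodule G :=
    Submodule.sum_mem _ fun ρ _ => Submodule.smul_mem _ _ ρ.2.mem_classFunSubmodule
  suffices f - p = 0 by rwa [sub_eq_zero.mp this]
  refine eq_zero_of_forall_charPairing_eq_zero (sub_mem hf hp_class) fun σ hσ => ?_
  have pairing_p : charPairing ℂ G p σ = charPairing ℂ G f σ := by
    simp only [p, map_sum, map_smul, LinearMap.sum_apply, LinearMap.smul_apply]
    rw [Fintype.sum_eq_single ⟨σ, hσ⟩, hσ.charPairing_self, smul_eq_mul, mul_one]
    intro ρ hne
    rw [ρ.2.charPairing_of_ne hσ fun h => hne (Subtype.ext h), smul_zero]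
  rw [map_sub, LinearMap.sub_apply, pairing_p, sub_self]

end IrrChar

section Twist

/-- The twist `g ↦ χ(g) σ(g)` of a representation `σ` by a linear character `χ`, i.e. the tensor
product of `σ` with the one-dimensional representation `χ`, realised on the space of `σ`. -/
def twist {k Γ V : Type*} [CommSemiring k] [Monoid Γ] [AddCommMonoid V] [Module k V] (χ : Γ →* k)
    (σ : Representation k Γ V) : Representation k Γ V where
  toFun g := χ g • σ g
  map_one' := by simp
  map_mul' g h := by rw [map_mul, map_mul, smul_mul_smul_comm]

theorem character_twist {k Γ V : Type*} [Field k] [Monoid Γ] [AddCommGroup V] [Module k V]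
    (χ : Γ →* k) (σ : Representation k Γ V) (g : Γ) :
    (twist χ σ).character g = χ g * σ.character g := by
  simp [twist, Representation.character]

variable (N : Subgroup G) [N.Normal]

theorem charPairing_charMul [Fintype G] (χ : (G ⧸ N) →* ℂˣ) (f h : G → ℂ) :
    charPairing ℂ G (charMul N χ f) (charMul N χ h) = charPairing ℂ G f h := by
  simp only [charPairing_apply, charMul, QuotientGroup.mk_inv, map_inv]
  congr! 2 with g
  rw [mul_mul_mul_comm, Units.mul_inv, one_mul]

theorem isIrrChar_charMul [Finite G] {ρ : G → ℂ} (hρ : IsIrrChar G ρ) (χ : (G ⧸ N) →* ℂˣ) :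
    IsIrrChar G (charMul N χ ρ) := by
  have := Fintype.ofFinite G
  have pairing_self := hρ.charPairing_self
  obtain ⟨V, -, rfl⟩ := hρ
  have character_eq : (twist ((Units.coeHom ℂ).comp (χ.comp (QuotientGroup.mk' N)))
      V.ρ).character = charMul N χ V.character :=
    funext fun g => character_twist _ _ g
  rw [← character_eq]
  apply isIrrChar_character_of_charPairing_self
  rw [character_eq, charPairing_charMul, pairing_self]

theorem charMul_one (f : G → ℂ) : charMul N 1 f = f := by
  ext g
  simp [charMul]

theorem charMul_charMul (χ ψ : (G ⧸ N) →* ℂˣ) (f : G → ℂ) :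
    charMul N χ (charMul N ψ f) = charMul N (χ * ψ) f := by
  ext g
  simp [charMul, mul_assoc]

theorem mem_qhatOrbit_self (f : G → ℂ) : f ∈ qhatOrbit N f :=
  ⟨1, (charMul_one N f).symm⟩

variable {N}

theorem qhatOrbit_eq_of_mem {f h : G → ℂ} (hh : h ∈ qhatOrbit N f) :
    qhatOrbit N h = qhatOrbit N f := by
  obtain ⟨χ, rfl⟩ := hh
  ext φ
  constructor
  · rintro ⟨ψ, rfl⟩
    exact ⟨ψ * χ, charMul_charMul N ψ χ f⟩
  · rintro ⟨ψ, rfl⟩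
    exact ⟨ψ * χ⁻¹, by rw [charMul_charMul, show ψ * χ⁻¹ * χ = ψ from inv_mul_cancel_right ψ χ]⟩

theorem disjoint_qhatOrbit {f h : G → ℂ} (hne : qhatOrbit N f ≠ qhatOrbit N h) :
    Disjoint (qhatOrbit N f) (qhatOrbit N h) :=
  Set.disjoint_left.mpr fun _ hf hh =>
    hne ((qhatOrbit_eq_of_mem hf).symm.trans (qhatOrbit_eq_of_mem hh))

end Twist

section CosetProjection

theorem sum_hom_apply_eq_zero {A R : Type*} [CommGroup A] [Finite A] [CommRing R] [IsDomain R]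
    [HasEnoughRootsOfUnity R (Monoid.exponent A)] [Fintype (A →* Rˣ)] {a : A} (ha : a ≠ 1) :
    ∑ χ : A →* Rˣ, (χ a : R) = 0 := by
  obtain ⟨χ, hχ⟩ := CommGroup.exists_apply_ne_one_of_hasEnoughRootsOfUnity A R ha
  refine sum_hom_units_eq_zero ((Units.coeHom R).comp (MonoidHom.eval a)) fun h => hχ ?_
  exact Units.ext (DFunLike.congr_fun h χ)

theorem conj_hom_apply {A : Type*} [Group A] [Finite A] (χ : A →* ℂˣ) (a : A) :
    (starRingEnd ℂ) (χ a : ℂ) = χ a⁻¹ := by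
  have norm_eq : ‖(χ a : ℂ)‖ = 1 :=
    Complex.norm_eq_one_of_pow_eq_one (n := Nat.card A)
      (by rw [← Units.val_pow_eq_pow_val, ← map_pow, pow_card_eq_one', map_one, Units.val_one])
      Nat.card_pos.ne'
  rw [map_inv, Units.val_inv_eq_inv_val, Complex.inv_eq_conj norm_eq]

variable {N : Subgroup G} [N.Normal]

open Classical in
theorem piQ_apply [Finite G] (hQ : ∀ a b : G ⧸ N, a * b = b * a) (x : G ⧸ N) (g : G) :
    piQ N x g = if (g : G ⧸ N) = x then 1 else 0 := by
  let : CommGroup (G ⧸ N) := { (inferInstance : Group (G ⧸ N)) with mul_comm := hQ }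
  have := Fintype.ofFinite ((G ⧸ N) →* ℂˣ)
  have sum_eq : ∑ χ : (G ⧸ N) →* ℂˣ, (starRingEnd ℂ) (χ x : ℂ) * (χ (g : G ⧸ N) : ℂ) =
      ∑ χ : (G ⧸ N) →* ℂˣ, (χ (x⁻¹ * g) : ℂ) := by
    simp [conj_hom_apply]
  rw [piQ, finsum_eq_sum_of_fintype, sum_eq]
  split_ifs with h
  · simp [h]
  · rw [sum_hom_apply_eq_zero fun h' => h (inv_mul_eq_one.mp h').symm, mul_zero]

theorem piQ_mul_eq_indicator [Finite G] (hQ : ∀ a b : G ⧸ N, a * b = b * a) (q : G) (f : G → ℂ) :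
    piQ N q * f = (coset N q).indicator f := by
  classical
  ext g
  simp [piQ_apply hQ, Set.indicator_apply, coset]

theorem indicator_coset_mem_span_qhatOrbit [Finite G] (hQ : ∀ a b : G ⧸ N, a * b = b * a) (q : G)
    (f : G → ℂ) : (coset N q).indicator f ∈ Submodule.span ℂ (qhatOrbit N f) := by
  have := Fintype.ofFinite ((G ⧸ N) →* ℂˣ)
  have piQ_mul_eq : piQ N q * f = (Nat.card ((G ⧸ N) →* ℂˣ) : ℂ)⁻¹ •
      ∑ χ : (G ⧸ N) →* ℂˣ, (starRingEnd ℂ) (χ q : ℂ) • charMul N χ f := by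
    ext g
    simp [piQ, finsum_eq_sum_of_fintype, charMul, Finset.sum_mul, mul_assoc]
  rw [← piQ_mul_eq_indicator hQ, piQ_mul_eq]
  exact Submodule.smul_mem _ _ (Submodule.sum_mem _ fun χ _ =>
    Submodule.smul_mem _ _ (Submodule.subset_span ⟨χ, rfl⟩))

theorem indicator_coset_charMul (χ : (G ⧸ N) →* ℂˣ) (q : G) (f : G → ℂ) :
    (coset N q).indicator (charMul N χ f) = (χ q : ℂ) • (coset N q).indicator f := by
  ext g
  by_cases hg : g ∈ coset N q
  · simp [hg, charMul, show (g : G ⧸ N) = q from hg]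
  · simp [hg]

theorem conj_mem_coset_iff (hQ : ∀ a b : G ⧸ N, a * b = b * a) {q g h : G} :
    h * g * h⁻¹ ∈ coset N q ↔ g ∈ coset N q := by
  simp [coset, hQ h g]

theorem indicator_coset_mem_cosetClassFun (hQ : ∀ a b : G ⧸ N, a * b = b * a) (q : G) {f : G → ℂ}
    (hf : f ∈ classFunSubmodule G) : (coset N q).indicator f ∈ cosetClassFun N q := by
  classical
  refine ⟨fun g h => ?_, fun g hg => Set.indicator_of_notMem hg f⟩
  simp only [Set.indicator_apply, conj_mem_coset_iff hQ, hf g h]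

theorem indicator_coset_of_mem_cosetClassFun {q : G} {f : G → ℂ} (hf : f ∈ cosetClassFun N q) :
    (coset N q).indicator f = f :=
  Set.indicator_eq_self.mpr fun g => not_imp_comm.mp (hf.2 g)

end CosetProjection

section Dimension

variable {N : Subgroup G} [N.Normal]

theorem linearIndependent_indicator_coset [Finite G] (hQ : ∀ a b : G ⧸ N, a * b = b * a) (q : G)
    {κ : Type*} {r : κ → G → ℂ} (hirr : ∀ i, IsIrrChar G (r i))
    (hinj : Function.Injective fun i => qhatOrbit N (r i))
    (hne : ∀ i, (coset N q).indicator (r i) ≠ 0) :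
    LinearIndependent ℂ fun i => (coset N q).indicator (r i) := by
  let orbit (i : κ) : Set {ρ // IsIrrChar G ρ} := (↑) ⁻¹' qhatOrbit N (r i)
  have image_orbit (i : κ) : (↑) '' orbit i = qhatOrbit N (r i) := by
    refine Set.image_preimage_eq_of_subset ?_
    rintro _ ⟨χ, rfl⟩
    exact ⟨⟨_, isIrrChar_charMul N (hirr i) χ⟩, rfl⟩
  have disjoint_orbit : Pairwise fun i j => Disjoint (orbit i) (orbit j) :=
    fun i j hij => (disjoint_qhatOrbit (hinj.ne hij)).preimage _
  refine (iSupIndep_span_image linearIndependent_irrChar disjoint_orbit).linearIndependent _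
    (fun i => ?_) hne
  rw [image_orbit]
  exact indicator_coset_mem_span_qhatOrbit hQ q (r i)

theorem span_indicator_coset_eq_cosetClassFun [Finite G] (hQ : ∀ a b : G ⧸ N, a * b = b * a)
    (q : G) {κ : Type*} {r : κ → G → ℂ} (hirr : ∀ i, IsIrrChar G (r i))
    (hexh : ∀ ρ, IsIrrChar G ρ → (coset N q).indicator ρ ≠ 0 → ∃ i, ρ ∈ qhatOrbit N (r i)) :
    Submodule.span ℂ (Set.range fun i => (coset N q).indicator (r i)) = cosetClassFun N q := by
  refine le_antisymm (Submodule.span_le.mpr ?_) fun f hf => ?_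
  · rintro _ ⟨i, rfl⟩
    exact indicator_coset_mem_cosetClassFun hQ q (hirr i).mem_classFunSubmodule
  have hf_span : f ∈ Submodule.span ℂ {ρ | IsIrrChar G ρ} := span_irrChar.ge hf.1
  rw [← indicator_coset_of_mem_cosetClassFun hf]
  clear hf
  induction hf_span using Submodule.span_induction with
  | mem ρ hρ =>
    by_cases hρ_zero : (coset N q).indicator ρ = 0
    · exact hρ_zero ▸ zero_mem _
    obtain ⟨i, χ, rfl⟩ := hexh ρ hρ hρ_zero
    rw [indicator_coset_charMul]
    exact Submodule.smul_mem _ _ (Submodule.subset_span ⟨i, rfl⟩)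
  | zero => simp
  | add f h _ _ hf hh =>
    rw [Set.indicator_add']
    exact add_mem hf hh
  | smul c f _ hf =>
    have indicator_smul : (coset N q).indicator (c • f) = c • (coset N q).indicator f :=
      Set.indicator_const_smul (coset N q) c f
    exact indicator_smul ▸ Submodule.smul_mem _ c hf

theorem exists_irrChar_of_mem_Rset {q : G} {S : Set (G → ℂ)} (hS : S ∈ Rset N q) :
    ∃ ρ, IsIrrChar G ρ ∧ qhatOrbit N ρ = S ∧ (coset N q).indicator ρ ≠ 0 := by
  obtain ⟨⟨ρ, hρ, rfl⟩, _, ⟨χ, rfl⟩, g, hg, hne⟩ := hS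
  refine ⟨ρ, hρ, rfl, fun h => hne ?_⟩
  rw [charMul, ← Set.indicator_of_mem hg ρ, h, Pi.zero_apply, mul_zero]

theorem qhatOrbit_mem_Rset {q : G} {ρ : G → ℂ} (hρ : IsIrrChar G ρ)
    (hne : (coset N q).indicator ρ ≠ 0) : qhatOrbit N ρ ∈ Rset N q := by
  obtain ⟨g, hg⟩ := Function.ne_iff.mp hne
  exact ⟨⟨ρ, hρ, rfl⟩, ρ, mem_qhatOrbit_self N ρ, g, Set.mem_of_indicator_ne_zero hg,
    fun h => hg (by simp [Set.indicator_apply_eq_zero, h])⟩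

theorem finrank_cosetClassFun_eq_ncard_Rset [Finite G] (hQ : ∀ a b : G ⧸ N, a * b = b * a)
    (q : G) : Module.finrank ℂ (cosetClassFun N q) = (Rset N q).ncard := by
  choose r hirr horb hne using fun S : Rset N q => exists_irrChar_of_mem_Rset S.2
  have hinj : Function.Injective fun S => qhatOrbit N (r S) := by
    simpa only [horb] using Subtype.val_injective
  have hexh (ρ : G → ℂ) (hρ : IsIrrChar G ρ) (hρ_ne : (coset N q).indicator ρ ≠ 0) :
      ∃ S, ρ ∈ qhatOrbit N (r S) :=
    ⟨⟨_, qhatOrbit_mem_Rset hρ hρ_ne⟩, by rw [horb]; exact mem_qhatOrbit_self N ρ⟩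
  rw [← span_indicator_coset_eq_cosetClassFun hQ q hirr hexh, Module.finrank_eq_nat_card_basis
    (Module.Basis.span (linearIndependent_indicator_coset hQ q hirr hinj hne)),
    Nat.card_coe_set_eq]

theorem mk_mem_Cset_iff (hQ : ∀ a b : G ⧸ N, a * b = b * a) {q g : G} :
    ConjClasses.mk g ∈ Cset N q ↔ g ∈ coset N q := by
  refine ⟨fun h => h ConjClasses.mem_carrier_mk, fun hg k hk => ?_⟩
  obtain ⟨c, rfl⟩ := isConj_iff.mp (ConjClasses.mk_eq_mk_iff_isConj.mp
    (ConjClasses.mem_carrier_iff_mk_eq.mp hk).symm)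
  exact (conj_mem_coset_iff hQ).mpr hg

/-- The linear map sending a function on the set `C_q` of conjugacy classes contained in `qN` to
the class function on `G` that it induces, extended by zero to the other conjugacy classes. -/
noncomputable def ofCset (N : Subgroup G) [N.Normal] (q : G) : (Cset N q → ℂ) →ₗ[ℂ] (G → ℂ) :=
  LinearMap.funLeft ℂ ℂ ConjClasses.mk ∘ₗ Function.ExtendByZero.linearMap ℂ Subtype.val

theorem ofCset_injective (N : Subgroup G) [N.Normal] (q : G) : Function.Injective (ofCset N q) :=
  (LinearMap.funLeft_injective_of_surjective ℂ ℂ _ ConjClasses.mk_surjective).comp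
    (Function.extend_injective Subtype.val_injective (0 : ConjClasses G → ℂ))

theorem apply_eq_of_mk_eq_mk {f : G → ℂ} (hf : f ∈ classFunSubmodule G) {g h : G}
    (hgh : ConjClasses.mk g = ConjClasses.mk h) : f g = f h := by
  obtain ⟨c, rfl⟩ := isConj_iff.mp (ConjClasses.mk_eq_mk_iff_isConj.mp hgh)
  exact (hf g c).symm

theorem ofCset_apply_of_mem {q g : G} (φ : Cset N q → ℂ) (hg : ConjClasses.mk g ∈ Cset N q) :
    ofCset N q φ g = φ ⟨ConjClasses.mk g, hg⟩ :=
  Subtype.val_injective.extend_apply φ 0 ⟨ConjClasses.mk g, hg⟩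

theorem ofCset_apply_of_notMem {q g : G} (φ : Cset N q → ℂ) (hg : ConjClasses.mk g ∉ Cset N q) :
    ofCset N q φ g = 0 :=
  Function.extend_apply' φ (0 : ConjClasses G → ℂ) (ConjClasses.mk g) fun ⟨c, hc⟩ => hg (hc ▸ c.2)

theorem range_ofCset (hQ : ∀ a b : G ⧸ N, a * b = b * a) (q : G) :
    LinearMap.range (ofCset N q) = cosetClassFun N q := by
  apply le_antisymm
  · rintro _ ⟨φ, rfl⟩
    refine ⟨fun g h => ?_, fun g hg => ofCset_apply_of_notMem φ (mt (mk_mem_Cset_iff hQ).mp hg)⟩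
    have mk_conj : ConjClasses.mk (h * g * h⁻¹) = ConjClasses.mk g :=
      (ConjClasses.mk_eq_mk_iff_isConj.mpr (isConj_iff.mpr ⟨h, rfl⟩)).symm
    exact congrArg (Function.extend Subtype.val φ 0) mk_conj
  · intro f hf
    obtain ⟨s, hs⟩ := ConjClasses.mk_surjective (α := G).hasRightInverse
    refine ⟨fun c => f (s c), funext fun g => ?_⟩
    by_cases hg : ConjClasses.mk g ∈ Cset N q
    · rw [ofCset_apply_of_mem _ hg]
      exact apply_eq_of_mk_eq_mk hf.1 (hs _)
    · rw [ofCset_apply_of_notMem _ hg, hf.2 g (mt (mk_mem_Cset_iff hQ).mpr hg)]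

theorem finrank_cosetClassFun_eq_ncard_Cset [Finite G] (hQ : ∀ a b : G ⧸ N, a * b = b * a)
    (q : G) : Module.finrank ℂ (cosetClassFun N q) = (Cset N q).ncard := by
  have := Fintype.ofFinite (Cset N q)
  rw [← range_ofCset hQ, LinearMap.finrank_range_of_inj (ofCset_injective N q),
    Module.finrank_fintype_fun_eq_card, ← Nat.card_eq_fintype_card, Nat.card_coe_set_eq]

end Dimension

/-- If `N ⊴ G` with `G ⧸ N` abelian and `q ∈ G`, the number of conjugacy
classes of `G` contained in `qN` equals the number of `Q̂`-orbits on the irreducible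
characters of `G` containing a character not identically zero on `qN`. -/
theorem conjClasses_coset_card_eq_orbit_card
    (G : Type) [Group G] [Fintype G] (N : Subgroup G) [N.Normal]
    (hQ : ∀ a b : G ⧸ N, a * b = b * a) (q : G) :
    (Cset N q).ncard = (Rset N q).ncard := by
  rw [← finrank_cosetClassFun_eq_ncard_Cset hQ, finrank_cosetClassFun_eq_ncard_Rset hQ]
end

section
/- Let G be a finite group, N a normal subgroup with Q = G/N abelian, and ρ an irreducible complex character of G. Then the order of the stabilizer of ρ in Q̂ under the tensoring action equals the inner product ⟨Res_N ρ, Res_N ρ⟩ of the restriction of ρ to N with itself, i.e. #Stab_{Q̂}(ρ) = (1/#N) Σ_{n∈N} ρ(n) conj(ρ(n)). -/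
open scoped BigOperators

variable {G : Type} [Group G]

/-!
Since `ρ` and each twist `χ · ρ` are irreducible, the inner product `⟨χ · ρ, ρ⟩` is `1` if `χ` fixes
`ρ` and `0` otherwise, so the order of the stabilizer is `∑ χ, ⟨χ · ρ, ρ⟩`. Exchanging the two sums,
the inner sum `∑ χ, χ (gN)` is `#Q` for `g ∈ N` and `0` otherwise, which leaves `#Q / #G = 1 / #N`
times the sum of `ρ n * ρ n⁻¹` over `N`. Averaging over `G` gives an invariant positive definite
Hermitian form, for which `G` acts unitarily, so `ρ n⁻¹` is the complex conjugate of `ρ n`.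
-/

section DualGroup

theorem sum_dual_apply {Q R : Type*} [CommGroup Q] [Finite Q] [CommRing R] [IsDomain R]
    [HasEnoughRootsOfUnity R (Monoid.exponent Q)] [Fintype (Q →* Rˣ)] (q : Q) [Decidable (q = 1)] :
    ∑ χ : Q →* Rˣ, (χ q : R) = if q = 1 then (Nat.card Q : R) else 0 := by
  split_ifs with hq
  · simp [hq, ← CommGroup.card_monoidHom_of_hasEnoughRootsOfUnity Q R]
  · obtain ⟨φ, hφ⟩ := CommGroup.exists_apply_ne_one_of_hasEnoughRootsOfUnity Q R hq
    let evalAt : (Q →* Rˣ) →* R := (Units.coeHom R).comp (MonoidHom.eval q)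
    have evalAt_ne_one : evalAt ≠ 1 := fun h ↦ hφ (Units.ext (DFunLike.congr_fun h φ))
    exact sum_hom_units_eq_zero evalAt evalAt_ne_one

open scoped IsMulCommutative in
theorem sum_dual_quotient_sum_mul {G R : Type*} [Group G] [Fintype G] (N : Subgroup G) [N.Normal]
    [IsMulCommutative (G ⧸ N)] [CommRing R] [IsDomain R]
    [HasEnoughRootsOfUnity R (Monoid.exponent (G ⧸ N))] [Fintype ((G ⧸ N) →* Rˣ)] (f : G → R) :
    ∑ χ : (G ⧸ N) →* Rˣ, ∑ g : G, (χ (g : G ⧸ N) : R) * f g =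
      Nat.card (G ⧸ N) * ∑ᶠ n ∈ (N : Set G), f n := by
  classical
  calc
    _ = ∑ g : G, (∑ χ : (G ⧸ N) →* Rˣ, (χ (g : G ⧸ N) : R)) * f g := by
      simp only [Finset.sum_mul, Finset.sum_comm (γ := G)]
    _ = ∑ g : G, if g ∈ N then (Nat.card (G ⧸ N) : R) * f g else 0 := by
      simp only [sum_dual_apply, QuotientGroup.eq_one_iff, ite_mul, zero_mul]
    _ = Nat.card (G ⧸ N) * ∑ᶠ n ∈ (N : Set G), f n := by
      rw [finsum_mem_def, finsum_eq_sum_of_fintype, Finset.mul_sum]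
      simp only [Set.indicator_apply, SetLike.mem_coe, mul_ite, mul_zero]

end DualGroup

section Twist

open CategoryTheory MonoidalCategory

universe u v

section Monoid

variable {k : Type u} {G : Type v} [Field k] [Monoid G]

/-- The one-dimensional representation of `G` on `k` through a linear character `χ`; tensoring with
it is the twist by `χ`. -/
noncomputable def linearFDRep (χ : G →* kˣ) : FDRep k G :=
  FDRep.of ((Algebra.lmul k k).toMonoidHom.comp ((Units.coeHom k).comp χ))

theorem character_linearFDRep (χ : G →* kˣ) (g : G) : (linearFDRep χ).character g = χ g :=
  Algebra.trace_self_apply (χ g : k)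

theorem character_linearFDRep_tensor (χ : G →* kˣ) (V : FDRep k G) :
    (linearFDRep χ ⊗ V).character = fun g ↦ (χ g : k) * V.character g := by
  ext g
  rw [FDRep.char_tensor, Pi.mul_apply, character_linearFDRep]

end Monoid

variable {k G : Type u} [Field k] [IsAlgClosed k] [CharZero k] [Group G]

theorem simple_linearFDRep_tensor [Finite G] (χ : G →* kˣ) (V : FDRep k G) [hV : Simple V] :
    Simple (linearFDRep χ ⊗ V) := by
  have := Fintype.ofFinite G
  rw [FDRep.simple_iff_char_is_norm_one] at hV ⊢
  rw [← hV, character_linearFDRep_tensor]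
  refine Finset.sum_congr rfl fun g _ ↦ ?_
  rw [mul_mul_mul_comm, ← Units.val_mul, ← map_mul, mul_inv_cancel, map_one, Units.val_one, one_mul]

theorem sum_twist_character_mul_character_inv [Fintype G] (χ : G →* kˣ) (V : FDRep k G)
    [hV : Simple V] [Decidable ((fun g ↦ (χ g : k) * V.character g) = V.character)] :
    ∑ g : G, (χ g : k) * (V.character g * V.character g⁻¹) =
      if (fun g ↦ (χ g : k) * V.character g) = V.character then (Nat.card G : k) else 0 := by
  simp only [← mul_assoc]
  split_ifs with fixed
  · simp only [congrFun fixed, (FDRep.simple_iff_char_is_norm_one V).1 hV]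
  · have card_ne_zero : (Nat.card G : k) ≠ 0 := NeZero.ne _
    have := invertibleOfNonzero card_ne_zero
    have := simple_linearFDRep_tensor χ V
    have not_iso : ¬ Nonempty (linearFDRep χ ⊗ V ≅ V) := fun ⟨i⟩ ↦
      fixed ((character_linearFDRep_tensor χ V).symm.trans (FDRep.char_iso i))
    have orthogonal := FDRep.char_orthonormal (linearFDRep χ ⊗ V) V
    rw [if_neg not_iso, character_linearFDRep_tensor] at orthogonal
    exact (mul_eq_zero.1 orthogonal).resolve_left (inv_ne_zero card_ne_zero)

theorem sum_sum_twist_character_mul_character_inv [Fintype G] (N : Subgroup G) [N.Normal]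
    [Fintype ((G ⧸ N) →* kˣ)] (V : FDRep k G) [Simple V] :
    ∑ χ : (G ⧸ N) →* kˣ, ∑ g : G, (χ (g : G ⧸ N) : k) * (V.character g * V.character g⁻¹) =
      Nat.card G * (Nat.card {χ : (G ⧸ N) →* kˣ //
        (fun g : G ↦ (χ (g : G ⧸ N) : k) * V.character g) = V.character} : k) := by
  classical
  have inner_sum (χ : (G ⧸ N) →* kˣ) :
      ∑ g : G, (χ (g : G ⧸ N) : k) * (V.character g * V.character g⁻¹) =
        if (fun g : G ↦ (χ (g : G ⧸ N) : k) * V.character g) = V.character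
          then (Nat.card G : k) else 0 :=
    sum_twist_character_mul_character_inv (χ.comp (QuotientGroup.mk' N)) V
  simp only [inner_sum]
  rw [← Finset.sum_filter, Finset.sum_const, Nat.card_eq_fintype_card (α := {χ // _}),
    Fintype.card_subtype, nsmul_eq_mul, mul_comm]

theorem stab_card_eq_res_selfInner_general [Finite G] (N : Subgroup G) [N.Normal]
    [IsMulCommutative (G ⧸ N)] (V : FDRep k G) [Simple V] :
    (Nat.card {χ : (G ⧸ N) →* kˣ //
        (fun g : G ↦ (χ (g : G ⧸ N) : k) * V.character g) = V.character} : k) =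
      (Nat.card N : k)⁻¹ * ∑ᶠ n ∈ (N : Set G), V.character n * V.character n⁻¹ := by
  have := Fintype.ofFinite G
  have := Fintype.ofFinite ((G ⧸ N) →* kˣ)
  have card_N_ne_zero : (Nat.card N : k) ≠ 0 := NeZero.ne _
  have card_Q_ne_zero : (Nat.card (G ⧸ N) : k) ≠ 0 := NeZero.ne _
  have double_count := sum_sum_twist_character_mul_character_inv N V
  rw [sum_dual_quotient_sum_mul, N.card_eq_card_quotient_mul_card_subgroup, Nat.cast_mul,
    mul_assoc] at double_count
  rw [eq_inv_mul_iff_mul_eq₀ card_N_ne_zero]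
  exact (mul_left_cancel₀ card_Q_ne_zero double_count).symm

end Twist

section ComplexConjugation

open Matrix
open scoped ComplexOrder

variable {G n 𝕜 : Type*} [Group G] [Finite G] [Fintype n] [DecidableEq n] [RCLike 𝕜]

theorem exists_posDef_conjTranspose_mul_mul_eq (M : G →* Matrix n n 𝕜) :
    ∃ P : Matrix n n 𝕜, P.PosDef ∧ ∀ g, (M g)ᴴ * P * M g = P := by
  have := Fintype.ofFinite G
  refine ⟨∑ h, (M h)ᴴ * M h, posDef_sum ⟨1, Finset.mem_univ _⟩ fun h _ ↦ ?_, fun g ↦ ?_⟩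
  · exact .conjTranspose_mul_self _ (mulVec_injective_of_isUnit ((Group.isUnit h).map M))
  · rw [Finset.mul_sum, Finset.sum_mul]
    refine Fintype.sum_equiv (Equiv.mulRight g) _ _ fun h ↦ ?_
    simp only [Equiv.coe_mulRight, map_mul, conjTranspose_mul, Matrix.mul_assoc]

theorem trace_map_inv_eq_star (M : G →* Matrix n n 𝕜) (g : G) :
    (M g⁻¹).trace = star (M g).trace := by
  obtain ⟨P, hP, invariant⟩ := exists_posDef_conjTranspose_mul_mul_eq M
  have isUnit_det : IsUnit P.det := (isUnit_iff_isUnit_det P).1 hP.isUnit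
  have intertwines : P * M g⁻¹ = (M g)ᴴ * P := by
    rw [← invariant g, Matrix.mul_assoc, ← map_mul, mul_inv_cancel, map_one, Matrix.mul_one,
      invariant]
  calc
    (M g⁻¹).trace = (P⁻¹ * (P * M g⁻¹)).trace := by rw [nonsing_inv_mul_cancel_left _ _ isUnit_det]
    _ = ((M g)ᴴ * P * P⁻¹).trace := by rw [intertwines, trace_mul_comm]
    _ = star (M g).trace := by rw [mul_nonsing_inv_cancel_right _ _ isUnit_det, trace_conjTranspose]

theorem representation_character_inv_eq_star {V : Type*} [AddCommGroup V] [Module 𝕜 V]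
    [FiniteDimensional 𝕜 V] (σ : Representation 𝕜 G V) (g : G) :
    σ.character g⁻¹ = star (σ.character g) := by
  let b := Module.finBasis 𝕜 V
  let M : G →* Matrix _ _ 𝕜 := (LinearMap.toMatrixAlgEquiv b).toMulEquiv.toMonoidHom.comp σ
  have character_eq_trace (x : G) : σ.character x = (M x).trace :=
    LinearMap.trace_eq_matrix_trace 𝕜 b (σ x)
  rw [character_eq_trace, character_eq_trace, trace_map_inv_eq_star]

end ComplexConjugation

/-- `#Stab_{Q̂}(ρ) = ⟨Res_N ρ, Res_N ρ⟩`. -/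
theorem stab_card_eq_res_selfInner
    (G : Type) [Group G] [Fintype G] (N : Subgroup G) [N.Normal]
    (hQ : ∀ a b : G ⧸ N, a * b = b * a)
    (ρ : G → ℂ) (hρ : IsIrrChar G ρ) :
    (Nat.card {χ : (G ⧸ N) →* ℂˣ // charMul N χ ρ = ρ} : ℂ)
      = (Nat.card ↥N : ℂ)⁻¹ * ∑ᶠ n ∈ (N : Set G), ρ n * (starRingEnd ℂ) (ρ n) := by
  obtain ⟨V, _, rfl⟩ := hρ
  have : IsMulCommutative (G ⧸ N) := ⟨⟨hQ⟩⟩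
  have character_inv (n : G) : V.character n⁻¹ = starRingEnd ℂ (V.character n) :=
    representation_character_inv_eq_star V.ρ n
  simp only [← character_inv]
  exact stab_card_eq_res_selfInner_general N V
end
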